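/- Let ℓ≥1, n≥0, m≥0 and let σ ∈ D_{ℓ,n} be a colored derangement. The map (i_1,…,i_m) ↦ ⟨σ, i_1, …, i_m⟩ is a bijection from the set of weakly increasing sequences 0 ≤ i_1 ≤ i_2 ≤ ⋯ ≤ i_m ≤ n onto the set G(σ,m) = {τ ∈ G_{ℓ,n+m} : Der(τ) = σ}; the fixed points of ⟨σ,i_1,…,i_m⟩ are i_1+1, i_2+2, …, i_m+m, and fmaf⟨σ, i_1, …, i_m⟩ = fmaj σ + ℓ·(i_1 + i_2 + ⋯ + i_m). -/

import Mathlib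

/-! A non-fixed position of `τ` carries a letter whose absolute value is again a non-fixed position.
Hence `Der τ` is `τ` read along the increasing enumeration of the complement of `fixSet τ`, and
`τ` is determined by the pair `(fixSet τ, Der τ)`. Conversely, placing the letters of a derangement
`σ` along the enumeration of `Fᶜ` and uncolored fixed points on `F` realizes `(F, σ)`, because `σ`
contributes no fixed point of its own.

So `G(σ, m)` corresponds to the `m`-element sets `F` of positions, and these correspond to the
weakly increasing sequences: `i_j` is the number of elements of `Fᶜ` below the `j`-th element of
`F`. The 0-based positions in `F` then sum to `i_1 + ⋯ + i_m` plus `0 + 1 + ⋯ + (m - 1)`, the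
correction subtracted in `maf`, while uncolored fixed points do not contribute to `col`. -/

open Finset

/-- A colored permutation in `G_{ℓ,n} ≅ C_ℓ ≀ S_n`: an underlying permutation of `Fin n`
together with a color (exponent of `ζ`) attached to each position. The letter at (0-based)
position `i` of the word of `σ` is `ζ^(σ.2 i) · (σ.1 i + 1)` (1-based value `σ.1 i + 1`). -/
abbrev CP (ℓ n : ℕ) := Equiv.Perm (Fin n) × (Fin n → Fin ℓ)

namespace CP

variable {ℓ n : ℕ}

/-- `gtLetter a b` : the letter `a = (colorIndex, value)` is greater than `b` in the order
`1 > ζ > ⋯ > ζ^{ℓ-1}` on colors, colors compared first. -/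
def gtLetter (a b : ℕ × ℕ) : Prop := a.1 < b.1 ∨ (a.1 = b.1 ∧ b.2 < a.2)

instance (a b : ℕ × ℕ) : Decidable (gtLetter a b) := by unfold gtLetter; infer_instance

/-- The letter (color index, 0-based absolute value) at 0-based position `i`. -/
def letter (σ : CP ℓ n) (i : ℕ) : ℕ × ℕ :=
  if h : i < n then ((σ.2 ⟨i, h⟩ : ℕ), (σ.1 ⟨i, h⟩ : ℕ)) else (0, 0)

/-- 0-based descent positions : `i < n-1` such that `x_{i+1} > x_{i+2}` (1-based positions). -/
def desSet (σ : CP ℓ n) : Finset ℕ :=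
  (range (n - 1)).filter fun i => gtLetter (letter σ i) (letter σ (i + 1))

/-- Major index: sum of the (1-based) descent places. -/
def maj (σ : CP ℓ n) : ℕ := ∑ i ∈ desSet σ, (i + 1)

/-- Number of descents. -/
def des (σ : CP ℓ n) : ℕ := (desSet σ).card

/-- `col σ = Σ_j j·#{i : ε_{x_i} = ζ^j}`. -/
def col (σ : CP ℓ n) : ℕ := ∑ i, (σ.2 i : ℕ)

/-- flag major index. -/
def fmaj (σ : CP ℓ n) : ℕ := ℓ * maj σ + col σ

/-- The set of fixed points (position fixed and color `ζ^0 = 1`). -/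
def fixSet (σ : CP ℓ n) : Finset (Fin n) :=
  univ.filter fun i => σ.1 i = i ∧ (σ.2 i : ℕ) = 0

def fix (σ : CP ℓ n) : ℕ := (fixSet σ).card

/-- Number of excedances `x_i > i`. -/
def exc (σ : CP ℓ n) : ℕ :=
  (univ.filter fun i : Fin n => (σ.2 i : ℕ) = 0 ∧ (i : ℕ) < (σ.1 i : ℕ)).card

lemma card_nonfix (σ : CP ℓ n) : ((fixSet σ)ᶜ).card = n - fix σ := by
  rw [Finset.card_compl, fix, Fintype.card_fin]

lemma card_vals (σ : CP ℓ n) : (((fixSet σ)ᶜ).image σ.1).card = n - fix σ := by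
  rw [Finset.card_image_of_injective _ σ.1.injective, card_nonfix]

/-- The bijection from nonfixed positions to the set of their values. -/
def derMid (σ : CP ℓ n) :
    {x // x ∈ ((fixSet σ)ᶜ : Finset (Fin n))} ≃ {x // x ∈ ((fixSet σ)ᶜ).image σ.1} where
  toFun p := ⟨σ.1 p.1, Finset.mem_image_of_mem _ p.2⟩
  invFun v := ⟨σ.1.symm v.1, by
    obtain ⟨p, hp, hpv⟩ := Finset.mem_image.mp v.2
    simpa [← hpv] using hp⟩
  left_inv p := by simp
  right_inv v := by simp

/-- The derangement part `Der σ`: delete the fixed points of the word of `σ`, replace each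
absolute value by its rank among the remaining values, and keep the colors. -/
def Der (σ : CP ℓ n) : CP ℓ (n - fix σ) :=
  let eP := ((fixSet σ)ᶜ).orderIsoOfFin (card_nonfix σ)
  let eV := (((fixSet σ)ᶜ).image σ.1).orderIsoOfFin (card_vals σ)
  (eP.toEquiv.trans ((derMid σ).trans eV.toEquiv.symm), fun i => σ.2 (eP i))

/-- `maf σ = maj (Der σ) + Σ_{j=1}^k (i_j − j)` over the (1-based) fixed points
`i_1 < ⋯ < i_k`; with 0-based fixed positions this is `Σ f − k(k−1)/2`. -/
def maf (σ : CP ℓ n) : ℕ := maj (Der σ) + ((∑ i ∈ fixSet σ, (i : ℕ)) - (fix σ).choose 2)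

/-- flag maf. -/
def fmaf (σ : CP ℓ n) : ℕ := ℓ * maf σ + col σ

end CP

/-- The q-integer `[k]_q = 1 + q + ⋯ + q^{k-1}`. -/
def qint {R : Type*} [CommSemiring R] (q : R) (k : ℕ) : R := ∑ i ∈ range k, q ^ i

/-- Transport a colored permutation along an equality of sizes. -/
def castCP {ℓ a b : ℕ} (h : a = b) (σ : CP ℓ a) : CP ℓ b := h ▸ σ

/-- Given a weakly increasing sequence `0 ≤ i_1 ≤ ⋯ ≤ i_m ≤ n` (here `s k = i_{k+1}`),
the set of (0-based) positions `i_j + j - 1` of the inserted fixed points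
(1-based positions `i_j + j`). -/
def insPos {n m : ℕ} (s : Fin m → Fin (n + 1)) : Finset (Fin (n + m)) :=
  Finset.univ.image fun k : Fin m =>
    (⟨(s k : ℕ) + (k : ℕ), by have := (s k).isLt; have := k.isLt; omega⟩ : Fin (n + m))

namespace CP

section DerangementPart

variable {ℓ n k : ℕ}

lemma mem_fixSet {τ : CP ℓ n} {i : Fin n} : i ∈ fixSet τ ↔ τ.1 i = i ∧ (τ.2 i : ℕ) = 0 := by
  simp [fixSet]

lemma apply_mem_fixSet_iff {τ : CP ℓ n} {i : Fin n} : τ.1 i ∈ fixSet τ ↔ i ∈ fixSet τ := by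
  constructor <;> intro h
  · have hi : τ.1 i = i := τ.1.injective (mem_fixSet.mp h).1
    rwa [hi] at h
  · rwa [(mem_fixSet.mp h).1]

lemma Der_apply_of_orderEmbedding (τ : CP ℓ n) {e : Fin (n - fix τ) ↪o Fin n}
    (he : ∀ i, e i ∉ fixSet τ) (i : Fin (n - fix τ)) :
    e ((Der τ).1 i) = τ.1 (e i) ∧ (Der τ).2 i = τ.2 (e i) := by
  have e_eq_positions : e = ((fixSet τ)ᶜ).orderEmbOfFin (card_nonfix τ) :=
    orderEmbOfFin_unique' _ fun i => mem_compl.mpr (he i)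
  have e_mem_values : ∀ i, e i ∈ ((fixSet τ)ᶜ).image τ.1 := fun i =>
    mem_image.mpr ⟨τ.1.symm (e i), mem_compl.mpr fun h => he i <| by
      simpa using apply_mem_fixSet_iff.mpr h, τ.1.apply_symm_apply _⟩
  have e_eq_values : e = (((fixSet τ)ᶜ).image τ.1).orderEmbOfFin (card_vals τ) :=
    orderEmbOfFin_unique' _ e_mem_values
  constructor
  · have rank_spec : (((fixSet τ)ᶜ).image τ.1).orderIsoOfFin (card_vals τ) ((Der τ).1 i) =
        derMid τ (((fixSet τ)ᶜ).orderIsoOfFin (card_nonfix τ) i) := by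
      simp [Der]
    calc e ((Der τ).1 i)
        = (((fixSet τ)ᶜ).image τ.1).orderEmbOfFin (card_vals τ) ((Der τ).1 i) := by
          rw [← e_eq_values]
      _ = τ.1 (((fixSet τ)ᶜ).orderEmbOfFin (card_nonfix τ) i) := congrArg Subtype.val rank_spec
      _ = τ.1 (e i) := by rw [← e_eq_positions]
  · rw [e_eq_positions]
    rfl

/-- The derangement part of `τ` is `σ`. The size `n - fix τ` of `Der τ` is only propositionally
equal to the size `k` of `σ`, so the equality of sizes is part of the notion. -/
def HasDer (τ : CP ℓ n) (σ : CP ℓ k) : Prop := ∃ h : n - fix τ = k, castCP h (Der τ) = σ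

lemma HasDer.card_compl_fixSet {τ : CP ℓ n} {σ : CP ℓ k} (h : HasDer τ σ) :
    #(fixSet τ)ᶜ = k :=
  (card_nonfix τ).trans h.1

lemma HasDer.fix_eq {m : ℕ} {τ : CP ℓ (n + m)} {σ : CP ℓ n} (h : HasDer τ σ) : fix τ = m := by
  have := card_compl_add_card (fixSet τ)
  rw [h.card_compl_fixSet, Fintype.card_fin] at this
  exact Nat.add_left_cancel this

lemma HasDer.maj_Der {τ : CP ℓ n} {σ : CP ℓ k} (h : HasDer τ σ) : maj (Der τ) = maj σ := by
  obtain ⟨rfl, rfl⟩ := h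
  rfl

lemma hasDer_iff_of_range_eq {τ : CP ℓ n} {σ : CP ℓ k} {e : Fin k ↪o Fin n}
    (he : Set.range e = (fixSet τ : Set (Fin n))ᶜ) :
    HasDer τ σ ↔ ∀ i, τ.1 (e i) = e (σ.1 i) ∧ τ.2 (e i) = σ.2 i := by
  have card_eq : n - fix τ = k := by
    rw [← card_nonfix, ← Set.ncard_coe_finset, coe_compl, ← he,
      Set.ncard_range_of_injective e.injective, Nat.card_fin]
  subst card_eq
  have he' : ∀ i, e i ∉ fixSet τ := fun i => by
    simpa using he.subset (Set.mem_range_self i)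
  have hDer := Der_apply_of_orderEmbedding τ he'
  constructor
  · rintro ⟨_, rfl⟩ i
    exact ⟨(hDer i).1.symm, (hDer i).2.symm⟩
  · intro h
    exact ⟨rfl, Prod.ext (Equiv.ext fun i => e.injective ((hDer i).1.trans (h i).1))
      (funext fun i => (hDer i).2.trans (h i).2)⟩

lemma HasDer.exists_orderEmbedding {τ : CP ℓ n} {σ : CP ℓ k} (h : HasDer τ σ) :
    ∃ e : Fin k ↪o Fin n, Set.range e = (fixSet τ : Set (Fin n))ᶜ ∧
      ∀ i, τ.1 (e i) = e (σ.1 i) ∧ τ.2 (e i) = σ.2 i := by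
  have range_eq : Set.range ((fixSet τ)ᶜ.orderEmbOfFin h.card_compl_fixSet) =
      (fixSet τ : Set (Fin n))ᶜ := by
    rw [range_orderEmbOfFin, coe_compl]
  exact ⟨_, range_eq, (hasDer_iff_of_range_eq range_eq).mp h⟩

lemma HasDer.eq_of_fixSet_eq {τ τ' : CP ℓ n} {σ : CP ℓ k} (h : HasDer τ σ) (h' : HasDer τ' σ)
    (hfix : fixSet τ = fixSet τ') : τ = τ' := by
  obtain ⟨e, he, hτ⟩ := h.exists_orderEmbedding
  have hτ' := (hasDer_iff_of_range_eq (hfix ▸ he)).mp h'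
  have letters_eq : ∀ x, τ.1 x = τ'.1 x ∧ τ.2 x = τ'.2 x := by
    intro x
    by_cases hx : x ∈ fixSet τ
    · have hx' := mem_fixSet.mp (hfix ▸ hx)
      have hx := mem_fixSet.mp hx
      exact ⟨hx.1.trans hx'.1.symm, Fin.ext (hx.2.trans hx'.2.symm)⟩
    · obtain ⟨i, rfl⟩ := he.superset hx
      exact ⟨(hτ i).1.trans (hτ' i).1.symm, (hτ i).2.trans (hτ' i).2.symm⟩
  exact Prod.ext (Equiv.ext fun x => (letters_eq x).1) (funext fun x => (letters_eq x).2)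

lemma HasDer.col_eq {τ : CP ℓ n} {σ : CP ℓ k} (h : HasDer τ σ) : col τ = col σ := by
  obtain ⟨e, he, hτ⟩ := h.exists_orderEmbedding
  have color_zero : ∀ x ∉ Set.range e, (τ.2 x : ℕ) = 0 := fun x hx =>
    (mem_fixSet.mp (by simpa [he] using hx)).2
  exact (Fintype.sum_of_injective e e.injective _ _ color_zero fun i => by rw [(hτ i).2]).symm

lemma HasDer.fmaf_eq {τ : CP ℓ n} {σ : CP ℓ k} (h : HasDer τ σ) :
    fmaf τ = fmaj σ + ℓ * ((∑ i ∈ fixSet τ, (i : ℕ)) - (fix τ).choose 2) := by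
  rw [fmaf, maf, fmaj, h.maj_Der, h.col_eq]
  ring

end DerangementPart

section Extend

variable {ℓ n k : ℕ} [NeZero ℓ]

/-- The colored permutation of `n` letters that acts as `σ` along `e` and has uncolored fixed
points outside the range of `e`. With `e` the increasing enumeration of the complement of a set
`F`, this inserts into the word of `σ` a fixed point at every position in `F`. -/
noncomputable def extend (e : Fin k ↪ Fin n) (σ : CP ℓ k) : CP ℓ n :=
  (σ.1.viaEmbedding e, Function.extend e σ.2 fun _ => 0)

lemma extend_apply (e : Fin k ↪ Fin n) (σ : CP ℓ k) (i : Fin k) :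
    (extend e σ).1 (e i) = e (σ.1 i) ∧ (extend e σ).2 (e i) = σ.2 i :=
  ⟨σ.1.viaEmbedding_apply e i, e.injective.extend_apply σ.2 (fun _ => 0) i⟩

lemma apply_mem_fixSet_extend {e : Fin k ↪ Fin n} {σ : CP ℓ k} {i : Fin k} :
    e i ∈ fixSet (extend e σ) ↔ i ∈ fixSet σ := by
  simp only [mem_fixSet, extend_apply, e.injective.eq_iff]

lemma mem_fixSet_extend_of_notMem_range {e : Fin k ↪ Fin n} (σ : CP ℓ k) {x : Fin n}
    (hx : x ∉ Set.range e) : x ∈ fixSet (extend e σ) := by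
  refine mem_fixSet.mpr ⟨σ.1.viaEmbedding_apply_of_notMem e x hx, ?_⟩
  simp [extend, Function.extend_apply' _ _ _ hx]

lemma coe_fixSet_extend (e : Fin k ↪ Fin n) {σ : CP ℓ k} (hσ : fix σ = 0) :
    (fixSet (extend e σ) : Set (Fin n)) = (Set.range e)ᶜ := by
  ext x
  refine ⟨?_, mem_fixSet_extend_of_notMem_range σ⟩
  rintro hx ⟨i, rfl⟩
  have hi : i ∈ fixSet σ := apply_mem_fixSet_extend.mp hx
  simp [card_eq_zero.mp hσ] at hi

lemma hasDer_extend (e : Fin k ↪o Fin n) {σ : CP ℓ k} (hσ : fix σ = 0) :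
    HasDer (extend e.toEmbedding σ) σ := by
  refine (hasDer_iff_of_range_eq ?_).mpr (extend_apply e.toEmbedding σ)
  rw [coe_fixSet_extend _ hσ, compl_compl]
  rfl

lemma fixSet_extend_orderEmbOfFin_compl {F : Finset (Fin n)} (hF : #Fᶜ = k) {σ : CP ℓ k}
    (hσ : fix σ = 0) : fixSet (extend (Fᶜ.orderEmbOfFin hF).toEmbedding σ) = F := by
  apply coe_injective
  simp [coe_fixSet_extend _ hσ]

end Extend

end CP

section InsertionPositions

variable {n m : ℕ}

/-- The 0-based position `i_{k+1} + k` of the fixed point inserted at the slot `s k = i_{k+1}`;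
`insPos s` is the set of these positions. -/
def insPt (s : Fin m → Fin (n + 1)) (k : Fin m) : Fin (n + m) :=
  ⟨s k + k, by omega⟩

lemma insPos_eq_image (s : Fin m → Fin (n + 1)) : insPos s = univ.image (insPt s) := rfl

lemma coe_insPos (s : Fin m → Fin (n + 1)) :
    (insPos s : Set (Fin (n + m))) = Set.range (insPt s) := by
  simp [insPos_eq_image]

lemma insPt_injective_left : Function.Injective (insPt : (Fin m → Fin (n + 1)) → _) := by
  intro s t h
  funext k
  have hk : (s k : ℕ) + k = t k + k := congrArg Fin.val (congrFun h k)
  exact Fin.ext (Nat.add_right_cancel hk)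

lemma strictMono_insPt {s : Fin m → Fin (n + 1)} (hs : Monotone s) : StrictMono (insPt s) :=
  fun _ _ hab => Fin.lt_def.mpr (Nat.add_lt_add_of_le_of_lt (hs hab.le) hab)

lemma insPos_injOn : Set.InjOn insPos {s : Fin m → Fin (n + 1) | Monotone s} := by
  intro s hs t ht h
  apply insPt_injective_left
  rw [← (strictMono_insPt hs).range_inj (strictMono_insPt ht), ← coe_insPos, ← coe_insPos, h]

lemma card_insPos {s : Fin m → Fin (n + 1)} (hs : Monotone s) : #(insPos s) = m := by
  rw [insPos_eq_image, card_image_of_injective _ (strictMono_insPt hs).injective, card_fin]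

lemma card_compl_insPos {s : Fin m → Fin (n + 1)} (hs : Monotone s) : #(insPos s)ᶜ = n := by
  rw [card_compl, card_insPos hs, Fintype.card_fin, Nat.add_sub_cancel]

lemma sum_insPos {s : Fin m → Fin (n + 1)} (hs : Monotone s) :
    ∑ i ∈ insPos s, (i : ℕ) = ∑ k, (s k : ℕ) + m.choose 2 := by
  calc ∑ i ∈ insPos s, (i : ℕ)
      = ∑ k : Fin m, ((s k : ℕ) + k) := by
        rw [insPos_eq_image, sum_image (strictMono_insPt hs).injective.injOn]
        rfl
    _ = ∑ k, (s k : ℕ) + ∑ k ∈ range m, k := by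
        rw [sum_add_distrib, Fin.sum_univ_eq_sum_range fun k => k]
    _ = ∑ k, (s k : ℕ) + m.choose 2 := by
        rw [sum_range_id, Nat.choose_two_right]

lemma card_filter_map_univ_lt {α : Type*} [LinearOrder α] (e : Fin m ↪o α) (k : Fin m) :
    #{x ∈ univ.map e.toEmbedding | x < e k} = k := by
  simp [filter_map, filter_gt_eq_Iio]

lemma card_filter_lt_compl_add_card_filter_lt {N : ℕ} (F : Finset (Fin N)) (x : Fin N) :
    #{y ∈ Fᶜ | y < x} + #{y ∈ F | y < x} = x := by
  rw [← card_union_of_disjoint (disjoint_filter_filter disjoint_compl_left), ← filter_union,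
    union_comm, union_compl, filter_gt_eq_Iio, Fin.card_Iio]

lemma exists_monotone_insPos_eq {F : Finset (Fin (n + m))} (hF : #F = m) :
    ∃ s : Fin m → Fin (n + 1), Monotone s ∧ insPos s = F := by
  let f := F.orderEmbOfFin hF
  have map_f : univ.map f.toEmbedding = F := map_orderEmbOfFin_univ F hF
  have card_compl_eq : #Fᶜ = n := by rw [card_compl, hF, Fintype.card_fin, Nat.add_sub_cancel]
  let s (k : Fin m) : Fin (n + 1) :=
    ⟨#{x ∈ Fᶜ | x < f k}, Nat.lt_succ_of_le ((card_filter_le _ _).trans_eq card_compl_eq)⟩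
  have s_mono : Monotone s := fun a b hab =>
    card_le_card (monotone_filter_right _ fun x _ hx => hx.trans_le (f.monotone hab))
  have rank_f (k : Fin m) : #{x ∈ F | x < f k} = k := by
    simpa only [map_f] using card_filter_map_univ_lt f k
  have insPt_eq : insPt s = f := funext fun k => Fin.ext <| by
    calc (insPt s k : ℕ)
        = #{x ∈ Fᶜ | x < f k} + #{x ∈ F | x < f k} := by
          rw [rank_f]
          rfl
      _ = f k := card_filter_lt_compl_add_card_filter_lt F (f k)
  exact ⟨s, s_mono, by rw [insPos_eq_image, insPt_eq, image_orderEmbOfFin_univ]⟩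

end InsertionPositions

/-- For a colored derangement `σ ∈ D_{ℓ,n}`, the insertion map
`(i_1,…,i_m) ↦ ⟨σ,i_1,…,i_m⟩` is a bijection from weakly increasing sequences
`0 ≤ i_1 ≤ ⋯ ≤ i_m ≤ n` onto `G(σ,m) = {τ ∈ G_{ℓ,n+m} : Der τ = σ}`; the fixed points of
`⟨σ,i_1,…,i_m⟩` are `i_1+1, …, i_m+m`, and
`fmaf ⟨σ,i_1,…,i_m⟩ = fmaj σ + ℓ(i_1+⋯+i_m)`. (The insertion map is characterized by the
first two listed properties: a colored permutation is determined by its fixed point set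
together with its derangement part.) -/
theorem insertion_bijection (ℓ n m : ℕ) (hℓ : 1 ≤ ℓ) (σ : CP ℓ n) (hσ : CP.fix σ = 0) :
    ∃ ins : {s : Fin m → Fin (n + 1) // Monotone s} → CP ℓ (n + m),
      (∀ s, CP.fixSet (ins s) = insPos s.1) ∧
      (∀ s, ∃ h : n + m - CP.fix (ins s) = n, castCP h (CP.Der (ins s)) = σ) ∧
      Function.Injective ins ∧
      (∀ τ : CP ℓ (n + m),
        (∃ h : n + m - CP.fix τ = n, castCP h (CP.Der τ) = σ) → ∃ s, ins s = τ) ∧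
      (∀ s, CP.fmaf (ins s) = CP.fmaj σ + ℓ * ∑ k : Fin m, ((s.1 k : ℕ))) := by
  have : NeZero ℓ := ⟨Nat.one_le_iff_ne_zero.mp hℓ⟩
  let ins (s : {s : Fin m → Fin (n + 1) // Monotone s}) : CP ℓ (n + m) :=
    CP.extend ((insPos s.1)ᶜ.orderEmbOfFin (card_compl_insPos s.2)).toEmbedding σ
  have fixSet_ins : ∀ s, CP.fixSet (ins s) = insPos s.1 := fun s =>
    CP.fixSet_extend_orderEmbOfFin_compl (card_compl_insPos s.2) hσ
  have hasDer_ins : ∀ s, CP.HasDer (ins s) σ := fun s => CP.hasDer_extend _ hσ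
  refine ⟨ins, fixSet_ins, hasDer_ins, ?injective, ?surjective, ?fmaf⟩
  case injective =>
    intro s t hst
    exact Subtype.ext (insPos_injOn s.2 t.2 (by rw [← fixSet_ins, ← fixSet_ins, hst]))
  case surjective =>
    intro τ (hτ : CP.HasDer τ σ)
    obtain ⟨s, hs, hsτ⟩ := exists_monotone_insPos_eq hτ.fix_eq
    exact ⟨⟨s, hs⟩, (hasDer_ins _).eq_of_fixSet_eq hτ ((fixSet_ins _).trans hsτ)⟩
  case fmaf =>
    intro s
    rw [(hasDer_ins s).fmaf_eq, (hasDer_ins s).fix_eq, fixSet_ins, sum_insPos s.2,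
      Nat.add_sub_cancel]
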